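/- For ε > 0 and α > 2, the function x ↦ 1/(ε+‖x‖^α)² is integrable on ℝ² and ∫_{ℝ²} 1/(ε+‖x‖^α)² dx = 2π²·(α−2)·ε^{2/α−2}/(α²·sin(2π/α)). -/

import Mathlib

open Real MeasureTheory

/-!
In polar coordinates the integral over a `d`-dimensional space becomes
`∫ r ^ (d - 1) * (c + r ^ p) ^ (-s)` over `(0, ∞)`. The substitution `t = r ^ p` followed by
`x = t / (c + t)` turns it into the Beta integral with parameters `d / p` and `s - d / p`. When
`s = 2` these parameters add up to `2`, so that Euler's reflection formula evaluates the Beta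
function.
-/

section

open Set Metric Module ProbabilityTheory

section BetaIntegral

variable {a b : ℝ}

lemma eqOn_ofReal_beta_integrand (a b : ℝ) :
    EqOn (fun x : ℝ ↦ (x : ℂ) ^ ((a : ℂ) - 1) * (1 - (x : ℂ)) ^ ((b : ℂ) - 1))
      (fun x : ℝ ↦ ((x ^ (a - 1) * (1 - x) ^ (b - 1) : ℝ) : ℂ)) (Ioo 0 1) := fun x hx ↦ by
  simp only [Complex.ofReal_mul, Complex.ofReal_cpow hx.1.le,
    Complex.ofReal_cpow (sub_nonneg.2 hx.2.le), Complex.ofReal_sub, Complex.ofReal_one]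

lemma integrableOn_rpow_mul_one_sub_rpow (ha : 0 < a) (hb : 0 < b) :
    IntegrableOn (fun x : ℝ ↦ x ^ (a - 1) * (1 - x) ^ (b - 1)) (Ioo 0 1) := by
  have h_complex := Complex.betaIntegral_convergent (u := a) (v := b) (by simpa) (by simpa)
  rw [intervalIntegrable_iff_integrableOn_Ioo_of_le zero_le_one,
    integrableOn_congr_fun (eqOn_ofReal_beta_integrand a b) measurableSet_Ioo] at h_complex
  exact h_complex.re

lemma integral_rpow_mul_one_sub_rpow (ha : 0 < a) (hb : 0 < b) :
    ∫ x in Ioo (0 : ℝ) 1, x ^ (a - 1) * (1 - x) ^ (b - 1) = beta a b := by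
  rw [beta_eq_betaIntegralReal a b ha hb, Complex.betaIntegral,
    intervalIntegral.integral_of_le zero_le_one, integral_Ioc_eq_integral_Ioo,
    setIntegral_congr_fun measurableSet_Ioo (eqOn_ofReal_beta_integrand a b),
    integral_complex_ofReal, Complex.ofReal_re]

lemma beta_two_sub {s : ℝ} (hs : s ≠ 1) : beta s (2 - s) = (1 - s) * π / sin (π * s) := by
  have hGamma : Gamma (2 - s) = (1 - s) * Gamma (1 - s) := by
    rw [← Gamma_add_one (sub_ne_zero.2 hs.symm)]
    ring_nf
  rw [beta, add_sub_cancel, Gamma_two, div_one, hGamma, mul_left_comm,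
    Gamma_mul_Gamma_one_sub, mul_div_assoc]

end BetaIntegral

section Substitution

variable {c : ℝ}

lemma image_div_const_add_Ioi (hc : 0 < c) : (fun t : ℝ ↦ t / (c + t)) '' Ioi 0 = Ioo 0 1 := by
  ext x
  constructor
  · rintro ⟨t, ht : 0 < t, rfl⟩
    exact ⟨by positivity, (div_lt_one (by positivity)).2 (by linarith)⟩
  · rintro ⟨hx0, hx1⟩
    have hx1' : 0 < 1 - x := sub_pos.2 hx1
    refine ⟨c * x / (1 - x), div_pos (mul_pos hc hx0) hx1', ?_⟩
    field_simp
    ring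

lemma injOn_div_const_add (hc : 0 < c) : InjOn (fun t : ℝ ↦ t / (c + t)) (Ioi 0) := by
  intro t (ht : 0 < t) u (hu : 0 < u) htu
  rw [div_eq_div_iff (by positivity) (by positivity)] at htu
  exact mul_left_cancel₀ hc.ne' (by linarith)

lemma hasDerivAt_div_const_add {t : ℝ} (ht : c + t ≠ 0) :
    HasDerivAt (fun t : ℝ ↦ t / (c + t)) (c / (c + t) ^ 2) t :=
  ((hasDerivAt_id' t).div ((hasDerivAt_id' t).const_add c) ht).congr_deriv (by ring)

lemma hasDerivWithinAt_div_const_add (hc : 0 < c) (t : ℝ) (ht : t ∈ Ioi 0) :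
    HasDerivWithinAt (fun t : ℝ ↦ t / (c + t)) (c / (c + t) ^ 2) (Ioi 0) t :=
  (hasDerivAt_div_const_add (add_pos hc ht).ne').hasDerivWithinAt

variable {F : Type*} [NormedAddCommGroup F] [NormedSpace ℝ F]

lemma integrableOn_Ioi_comp_div_const_add_iff (hc : 0 < c) (f : ℝ → F) :
    IntegrableOn (fun t ↦ (c / (c + t) ^ 2) • f (t / (c + t))) (Ioi 0) ↔
      IntegrableOn f (Ioo 0 1) := by
  rw [← image_div_const_add_Ioi hc, integrableOn_image_iff_integrableOn_abs_deriv_smul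
    measurableSet_Ioi (hasDerivWithinAt_div_const_add hc) (injOn_div_const_add hc)]
  simp only [abs_of_nonneg (div_nonneg hc.le (sq_nonneg _))]

lemma integral_Ioi_comp_div_const_add (hc : 0 < c) (f : ℝ → F) :
    ∫ t in Ioi 0, (c / (c + t) ^ 2) • f (t / (c + t)) = ∫ x in Ioo 0 1, f x := by
  rw [← image_div_const_add_Ioi hc, integral_image_eq_integral_abs_deriv_smul
    measurableSet_Ioi (hasDerivWithinAt_div_const_add hc) (injOn_div_const_add hc)]
  simp only [abs_of_nonneg (div_nonneg hc.le (sq_nonneg _))]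

end Substitution

section HalfLine

variable {a b c p : ℝ}

lemma eqOn_beta_integrand_comp_div_const_add (hc : 0 < c) (a b : ℝ) :
    EqOn
      (fun t : ℝ ↦ (c / (c + t) ^ 2) • ((t / (c + t)) ^ (a - 1) * (1 - t / (c + t)) ^ (b - 1)))
      (fun t : ℝ ↦ c ^ b * (t ^ (a - 1) * (c + t) ^ (-(a + b)))) (Ioi 0) := by
  intro t (ht : 0 < t)
  have hct : 0 < c + t := add_pos hc ht
  have h_one_sub : 1 - t / (c + t) = c / (c + t) := by
    rw [one_sub_div hct.ne', add_sub_cancel_right]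
  have h_exponent : (c + t) ^ (-(a + b)) =
      ((c + t) ^ 2 * ((c + t) ^ (a - 1) * (c + t) ^ (b - 1)))⁻¹ := by
    rw [← rpow_natCast, ← rpow_add hct, ← rpow_add hct, ← rpow_neg hct.le]
    push_cast
    ring_nf
  simp only [smul_eq_mul]
  rw [h_one_sub, div_rpow ht.le hct.le, div_rpow hc.le hct.le, h_exponent,
    rpow_sub_one hc.ne' b]
  field_simp

lemma integrableOn_rpow_mul_const_add_rpow (hc : 0 < c) (ha : 0 < a) (hb : 0 < b) :
    IntegrableOn (fun t : ℝ ↦ t ^ (a - 1) * (c + t) ^ (-(a + b))) (Ioi 0) := by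
  have h_beta := (integrableOn_Ioi_comp_div_const_add_iff hc _).2
    (integrableOn_rpow_mul_one_sub_rpow ha hb)
  rw [integrableOn_congr_fun (eqOn_beta_integrand_comp_div_const_add hc a b)
    measurableSet_Ioi] at h_beta
  exact (integrable_const_mul_iff (rpow_pos_of_pos hc b).ne'.isUnit _).1 h_beta

lemma integral_rpow_mul_const_add_rpow (hc : 0 < c) (ha : 0 < a) (hb : 0 < b) :
    ∫ t in Ioi (0 : ℝ), t ^ (a - 1) * (c + t) ^ (-(a + b)) = c ^ (-b) * beta a b := by
  rw [← integral_rpow_mul_one_sub_rpow ha hb, ← integral_Ioi_comp_div_const_add hc,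
    setIntegral_congr_fun measurableSet_Ioi (eqOn_beta_integrand_comp_div_const_add hc a b),
    integral_const_mul, rpow_neg hc.le, inv_mul_cancel_left₀ (rpow_pos_of_pos hc b).ne']

lemma rpow_sub_one_mul_rpow_rpow_sub_one {r : ℝ} (hr : 0 < r) (p a : ℝ) :
    r ^ (p - 1) * (r ^ p) ^ (a - 1) = r ^ (p * a - 1) := by
  rw [← rpow_mul hr.le, ← rpow_add hr]
  ring_nf

lemma integrableOn_rpow_mul_const_add_rpow_rpow (hc : 0 < c) (hp : p ≠ 0) (ha : 0 < a)
    (hb : 0 < b) :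
    IntegrableOn (fun r : ℝ ↦ r ^ (p * a - 1) * (c + r ^ p) ^ (-(a + b))) (Ioi 0) := by
  refine ((integrableOn_Ioi_comp_rpow_iff' _ hp).2
    (integrableOn_rpow_mul_const_add_rpow hc ha hb)).congr_fun (fun r hr ↦ ?_) measurableSet_Ioi
  simp only [smul_eq_mul]
  rw [← mul_assoc, rpow_sub_one_mul_rpow_rpow_sub_one hr]

lemma integral_rpow_mul_const_add_rpow_rpow (hc : 0 < c) (hp : p ≠ 0) (ha : 0 < a)
    (hb : 0 < b) :
    ∫ r in Ioi (0 : ℝ), r ^ (p * a - 1) * (c + r ^ p) ^ (-(a + b)) =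
      c ^ (-b) * beta a b / |p| := by
  rw [eq_div_iff (abs_pos.2 hp).ne', mul_comm, ← integral_const_mul,
    ← integral_rpow_mul_const_add_rpow hc ha hb,
    ← integral_comp_rpow_Ioi (fun t ↦ t ^ (a - 1) * (c + t) ^ (-(a + b))) hp]
  refine setIntegral_congr_fun measurableSet_Ioi fun r hr ↦ ?_
  simp only [smul_eq_mul]
  rw [← rpow_sub_one_mul_rpow_rpow_sub_one hr, mul_assoc, mul_assoc]

lemma pow_pred_smul_const_add_rpow {d : ℕ} (hd : 0 < d) (hp : p ≠ 0) (c s r : ℝ) :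
    r ^ (d - 1) • (c + r ^ p) ^ (-s) =
      r ^ (p * (d / p) - 1) * (c + r ^ p) ^ (-(d / p + (s - d / p))) := by
  rw [smul_eq_mul, add_sub_cancel, mul_div_cancel₀ _ hp, ← Nat.cast_pred hd, rpow_natCast]

end HalfLine

section Radial

variable {E : Type*} [NormedAddCommGroup E] [NormedSpace ℝ E] [FiniteDimensional ℝ E]
  [Nontrivial E] [MeasurableSpace E] [BorelSpace E] (μ : Measure E) [μ.IsAddHaarMeasure]
  {c p s : ℝ}

lemma integrable_const_add_norm_rpow_rpow (hc : 0 < c) (hp : 0 < p) (hs : finrank ℝ E / p < s) :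
    Integrable (fun x : E ↦ (c + ‖x‖ ^ p) ^ (-s)) μ := by
  have hd : (0 : ℝ) < finrank ℝ E := Nat.cast_pos.2 finrank_pos
  rw [integrable_fun_norm_addHaar μ (f := fun r ↦ (c + r ^ p) ^ (-s))]
  simp only [pow_pred_smul_const_add_rpow finrank_pos hp.ne']
  exact integrableOn_rpow_mul_const_add_rpow_rpow hc hp.ne' (div_pos hd hp) (sub_pos.2 hs)

lemma integral_const_add_norm_rpow_rpow (hc : 0 < c) (hp : 0 < p) (hs : finrank ℝ E / p < s) :
    ∫ x : E, (c + ‖x‖ ^ p) ^ (-s) ∂μ =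
      finrank ℝ E * μ.real (ball 0 1) *
        (c ^ (finrank ℝ E / p - s) * beta (finrank ℝ E / p) (s - finrank ℝ E / p) / p) := by
  have hd : (0 : ℝ) < finrank ℝ E := Nat.cast_pos.2 finrank_pos
  rw [integral_fun_norm_addHaar μ (fun r ↦ (c + r ^ p) ^ (-s))]
  simp only [pow_pred_smul_const_add_rpow finrank_pos hp.ne']
  rw [integral_rpow_mul_const_add_rpow_rpow hc hp.ne' (div_pos hd hp) (sub_pos.2 hs),
    abs_of_pos hp, neg_sub, nsmul_eq_mul, smul_eq_mul, mul_assoc]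

theorem pathloss_squared_integral_general {ε α : ℝ} (hε : 0 < ε) (hα : finrank ℝ E < 2 * α)
    (hα' : α ≠ finrank ℝ E) :
    Integrable (fun x : E ↦ (1 / (ε + ‖x‖ ^ α)) ^ 2) μ ∧
    ∫ x : E, (1 / (ε + ‖x‖ ^ α)) ^ 2 ∂μ =
      finrank ℝ E * μ.real (ball 0 1) * π * (α - finrank ℝ E) * ε ^ (finrank ℝ E / α - 2) /
        (α ^ 2 * sin (finrank ℝ E * π / α)) := by
  have hα0 : 0 < α := by linarith [(finrank ℝ E).cast_nonneg (α := ℝ)]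
  have hs : finrank ℝ E / α < 2 := (div_lt_iff₀ hα0).2 hα
  have hs' : finrank ℝ E / α ≠ 1 := fun h ↦ hα' ((div_eq_one_iff_eq hα0.ne').1 h).symm
  have h_rpow (x : E) : (1 / (ε + ‖x‖ ^ α)) ^ 2 = (ε + ‖x‖ ^ α) ^ (-2 : ℝ) := by
    rw [rpow_neg (by positivity), rpow_two, one_div, inv_pow]
  have h_angle : π * (finrank ℝ E / α) = finrank ℝ E * π / α := by ring
  simp only [h_rpow]
  refine ⟨integrable_const_add_norm_rpow_rpow μ hε hα0 hs, ?_⟩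
  rw [integral_const_add_norm_rpow_rpow μ hε hα0 hs, beta_two_sub hs', h_angle,
    one_sub_div hα0.ne']
  ring

end Radial

end

/-- For `ε > 0` and `α > 2`, the function `x ↦ 1/(ε+‖x‖^α)²` is integrable on `ℝ²` and
`∫_{ℝ²} 1/(ε+‖x‖^α)² dx = 2π²·(α−2)·ε^(2/α−2)/(α²·sin(2π/α))`. -/
theorem pathloss_squared_integral (ε α : ℝ) (hε : 0 < ε) (hα : 2 < α) :
    Integrable (fun x : EuclideanSpace ℝ (Fin 2) => (1 / (ε + ‖x‖ ^ α)) ^ 2) ∧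
    ∫ x : EuclideanSpace ℝ (Fin 2), (1 / (ε + ‖x‖ ^ α)) ^ 2 =
      2 * π ^ 2 * (α - 2) * ε ^ (2 / α - 2) / (α ^ 2 * Real.sin (2 * π / α)) := by
  have h_ball : (volume : Measure (EuclideanSpace ℝ (Fin 2))).real (Metric.ball 0 1) = π := by
    simp [Measure.real, pi_nonneg]
  simpa [h_ball, pow_two, mul_assoc] using
    pathloss_squared_integral_general (volume : Measure (EuclideanSpace ℝ (Fin 2))) hε
      (by rw [finrank_euclideanSpace_fin]; norm_cast; linarith) (by simpa using hα.ne')
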